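/- Let X be a complex Banach space and L a generalized hyperbolic invertible bounded linear operator on X with associated splitting X = S ⊕ U. Then L is hyperbolic if and only if L(U) ∩ S = {0}. -/

import Mathlib

open Filter Topology

variable {X : Type*} [NormedAddCommGroup X] [NormedSpace ℂ X] [CompleteSpace X]

/-- `L` is hyperbolic: its spectrum misses the unit circle. -/
def Hyperbolic (L : X ≃L[ℂ] X) : Prop :=
  ∀ z ∈ spectrum ℂ (L : X →L[ℂ] X), ‖z‖ ≠ 1

theorem aux_pow (L : X ≃L[ℂ] X) (n : ℕ) (x : X) : ((L : X →L[ℂ] X) ^ n) x = (L ^ n) x := by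
  induction n generalizing x with
  | zero => rfl
  | succ n ih =>
    rw [pow_succ, pow_succ]
    exact ih (L x)

theorem aux_solve (A : X →L[ℂ] X) (y : X) (C r : ℝ) (hr0 : 0 ≤ r) (hr1 : r < 1)
    (h : ∀ n : ℕ, ‖(A ^ n) y‖ ≤ C * r ^ n) :
    ∃ a, a - A a = y ∧ ‖a - y‖ ≤ C * r * (1 - r)⁻¹ := by
  have hg : HasSum (fun n : ℕ => C * r * r ^ n) (C * r * (1 - r)⁻¹) :=
    (hasSum_geometric_of_lt_one hr0 hr1).mul_left _
  have hg0 : Summable (fun n : ℕ => C * r ^ n) :=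
    (summable_geometric_of_lt_one hr0 hr1).mul_left _
  have hs : Summable (fun n : ℕ => (A ^ n) y) := Summable.of_norm_bounded hg0 h
  have h1 : ∑' n : ℕ, (A ^ n) y = y + ∑' n : ℕ, (A ^ (n + 1)) y := by
    rw [hs.tsum_eq_zero_add]; simp
  have h2 : A (∑' n : ℕ, (A ^ n) y) = ∑' n : ℕ, (A ^ (n + 1)) y := by
    rw [A.map_tsum hs]
    congr 1; ext n; rw [pow_succ']; rfl
  refine ⟨∑' n : ℕ, (A ^ n) y, ?_, ?_⟩
  · rw [h2, h1]; abel
  · rw [h1, add_sub_cancel_left]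
    refine tsum_of_norm_bounded hg fun n => ?_
    refine (h (n + 1)).trans (le_of_eq ?_)
    ring

theorem aux_zero {x : X} (C t : ℝ) (ht0 : 0 < t) (ht1 : t < 1)
    (h : ∀ n : ℕ, ‖x‖ ≤ C * t ^ n) : x = 0 := by
  have h1 : Tendsto (fun n : ℕ => C * t ^ n) atTop (𝓝 (C * 0)) :=
    (tendsto_pow_atTop_nhds_zero_of_lt_one ht0.le ht1).const_mul C
  have h2 := ge_of_tendsto' h1 h
  simpa using h2

theorem aux_eig (A : X →L[ℂ] X) (z : ℂ) (hz : ‖z‖ = 1) (x : X) (hx : A x = z • x) (n : ℕ) :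
    ‖(A ^ n) x‖ = ‖x‖ := by
  have : (A ^ n) x = z ^ n • x := by
    induction n with
    | zero => simp
    | succ n ih =>
      rw [pow_succ]
      change (A ^ n) (A x) = _
      rw [hx, map_smul, ih, smul_smul, pow_succ']
  rw [this, norm_smul, norm_pow, hz]; simp

theorem aux_symm (L : X ≃L[ℂ] X) (n : ℕ) (x : X) : (L ^ n) ((L.symm ^ n) x) = x := by
  have h : L.symm = L⁻¹ := rfl
  rw [h, inv_pow]
  exact (L ^ n).apply_symm_apply x

theorem aux_forward (L : X ≃L[ℂ] X) (hL : Hyperbolic L) (C t : ℝ) (ht0 : 0 < t) (ht1 : t < 1)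
    (x : X) (h1 : ∀ n : ℕ, ‖(L ^ n) x‖ ≤ C * t ^ n)
    (h2 : ∀ n : ℕ, ‖(L.symm ^ n) x‖ ≤ C * t ^ n) : x = 0 := by
  by_contra hx
  have : Nontrivial X := ⟨x, 0, hx⟩
  have hC : 0 ≤ C := by simpa using (norm_nonneg _).trans (h1 0)
  apply hx
  refine aux_zero (2 * C * (1 - t)⁻¹) t ht0 ht1 fun N => ?_
  rcases Nat.eq_zero_or_pos N with rfl | hN
  · have := h1 0
    have h3 : 1 ≤ (1 - t)⁻¹ := (one_le_inv₀ (by linarith)).2 (by linarith)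
    simp only [pow_zero, mul_one] at this ⊢
    change ‖x‖ ≤ C at this
    nlinarith
  have hr1 : t ^ N < 1 := pow_lt_one₀ ht0.le ht1 hN.ne'
  have hrt : t ^ N ≤ t := pow_le_of_le_one ht0.le ht1.le hN.ne'
  obtain ⟨a, ha, ha'⟩ := aux_solve ((L : X →L[ℂ] X) ^ N) x C (t ^ N) (by positivity) hr1 (by
    intro n
    rw [← pow_mul, ← pow_mul, aux_pow]; exact h1 _)
  obtain ⟨b, hb, hb'⟩ := aux_solve ((L.symm : X →L[ℂ] X) ^ N) x C (t ^ N) (by positivity) hr1 (by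
    intro n
    rw [← pow_mul, ← pow_mul, aux_pow]; exact h2 _)
  rw [aux_pow] at ha hb
  have hb2 : (L ^ N) b - b = (L ^ N) x := by
    rw [← hb, map_sub, aux_symm]
  have hfix : (L ^ N) (a + (b - x)) = a + (b - x) := by
    rw [map_add, map_sub, ← hb2]
    rw [← ha]; abel
  have hns : (1 : ℂ) ∉ spectrum ℂ ((L : X →L[ℂ] X) ^ N) := by
    intro h
    rw [spectrum.map_pow_of_pos _ hN] at h
    obtain ⟨z, hz, hz1⟩ := h
    refine hL z hz ?_
    have : ‖z‖ ^ N = 1 := by rw [← norm_pow]; simp at hz1; rw [hz1]; simp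
    exact (pow_eq_one_iff_of_nonneg (norm_nonneg _) hN.ne').1 this
  rw [spectrum.notMem_iff, ContinuousLinearMap.isUnit_iff_bijective] at hns
  have hv : a + (b - x) = 0 := by
    apply hns.1
    simp only [map_one, map_zero, ContinuousLinearMap.sub_apply, aux_pow, hfix]
    simp
  have hxe : x = -((a - x) + (b - x)) := by
    have : (a - x) + (b - x) = (a + (b - x)) - x := by abel
    rw [this, hv]; simp
  have h4 : (1 - t ^ N)⁻¹ ≤ (1 - t)⁻¹ := by
    apply inv_anti₀ <;> linarith
  have h5 : C * t ^ N * (1 - t ^ N)⁻¹ ≤ C * t ^ N * (1 - t)⁻¹ := by gcongr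
  calc ‖x‖ = ‖(a - x) + (b - x)‖ := by conv_lhs => rw [hxe, norm_neg]
    _ ≤ ‖a - x‖ + ‖b - x‖ := norm_add_le _ _
    _ ≤ 2 * C * (1 - t)⁻¹ * t ^ N := by linarith

theorem hyperbolic_iff_image_inter_trivial (L : X ≃L[ℂ] X) (S U : Submodule ℂ X)
    (hScl : IsClosed (S : Set X)) (hUcl : IsClosed (U : Set X)) (hcompl : IsCompl S U)
    (hLS : ∀ x ∈ S, L x ∈ S) (hLU : ∀ x ∈ U, L.symm x ∈ U)
    (c t : ℝ) (hc : 0 < c) (ht0 : 0 < t) (ht1 : t < 1)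
    (hSest : ∀ x ∈ S, ∀ n : ℕ, ‖(L ^ n) x‖ ≤ c * t ^ n * ‖x‖)
    (hUest : ∀ x ∈ U, ∀ n : ℕ, ‖(L.symm ^ n) x‖ ≤ c * t ^ n * ‖x‖) :
    Hyperbolic L ↔ (⇑L '' (U : Set X)) ∩ (S : Set X) = {0} := by
  constructor
  · intro hL
    apply Set.eq_singleton_iff_unique_mem.2
    refine ⟨⟨⟨0, U.zero_mem, map_zero L⟩, S.zero_mem⟩, ?_⟩
    rintro x ⟨⟨u, hu, rfl⟩, hxS⟩
    have hu : u ∈ U := hu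
    have hxS : L u ∈ S := hxS
    have hct : 0 ≤ c * t⁻¹ * ‖u‖ := by positivity
    refine aux_forward L hL (c * ‖L u‖ + c * t⁻¹ * ‖u‖ + ‖L u‖) t ht0 ht1 _ (fun n => ?_)
      (fun n => ?_)
    · refine (hSest _ hxS n).trans ?_
      have : 0 ≤ (c * t⁻¹ * ‖u‖ + ‖L u‖) * t ^ n := by positivity
      linarith
    · cases n with
      | zero =>
        have : 0 ≤ c * ‖L u‖ + c * t⁻¹ * ‖u‖ := by positivity
        change ‖L u‖ ≤ _
        simp only [pow_zero, mul_one]; linarith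
      | succ n =>
        have e : (L.symm ^ (n + 1)) (L u) = (L.symm ^ n) u := by
          rw [pow_succ]
          change (L.symm ^ n) (L.symm (L u)) = _
          rw [L.symm_apply_apply]
        rw [e]
        refine (hUest _ hu n).trans ?_
        have h1 : 0 ≤ (c * ‖L u‖ + ‖L u‖) * t ^ (n + 1) := by positivity
        have h2 : c * t⁻¹ * ‖u‖ * t ^ (n + 1) = c * t ^ n * ‖u‖ := by
          field_simp; ring
        linarith
  · intro h z hz hz1
    have hz0 : z ≠ 0 := by rintro rfl; simp at hz1
    have hdec : ∀ x : X, ∃ s ∈ S, ∃ u ∈ U, s + u = x := fun x => by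
      have : x ∈ S ⊔ U := by rw [hcompl.sup_eq_top]; trivial
      exact Submodule.mem_sup.1 this
    have hLU' : ∀ u ∈ U, L u ∈ U := by
      intro u hu
      obtain ⟨s, hs, v, hv, e⟩ := hdec (L u)
      have hm : s ∈ (⇑L '' (U : Set X)) ∩ (S : Set X) := by
        refine ⟨⟨u - L.symm v, U.sub_mem hu (hLU v hv), ?_⟩, hs⟩
        rw [map_sub, L.apply_symm_apply, ← e]; abel
      rw [h] at hm
      have : s = 0 := hm
      rw [← e, this, zero_add]; exact hv
    refine hz ?_
    change IsUnit _
    rw [ContinuousLinearMap.isUnit_iff_bijective]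
    have happ : ∀ x, (algebraMap ℂ (X →L[ℂ] X) z - (L : X →L[ℂ] X)) x = z • x - L x :=
      fun x => rfl
    constructor
    · rw [injective_iff_map_eq_zero]
      intro x hx
      rw [happ] at hx
      obtain ⟨s, hs, u, hu, rfl⟩ := hdec x
      have hd : z • s - L s = -(z • u - L u) := by
        rw [smul_add, map_add] at hx
        rw [eq_neg_iff_add_eq_zero, ← hx]; abel
      have hsm : z • s - L s ∈ S := S.sub_mem (S.smul_mem _ hs) (hLS s hs)
      have hum : z • u - L u ∈ U := U.sub_mem (U.smul_mem _ hu) (hLU' u hu)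
      have hs0 : z • s - L s = 0 :=
        Submodule.disjoint_def.1 hcompl.disjoint _ hsm (by rw [hd]; exact U.neg_mem hum)
      have hu0 : z • u - L u = 0 := by rw [hs0] at hd; exact neg_eq_zero.1 hd.symm
      have hs' : s = 0 := by
        refine aux_zero (c * ‖s‖) t ht0 ht1 fun n => ?_
        rw [← aux_eig (L : X →L[ℂ] X) z hz1 s (sub_eq_zero.1 hs0).symm n, aux_pow]
        refine (hSest s hs n).trans (le_of_eq ?_)
        rw [← aux_pow, aux_eig (L : X →L[ℂ] X) z hz1 s (sub_eq_zero.1 hs0).symm n]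
        ring
      have hu' : u = 0 := by
        have hus : (L.symm : X →L[ℂ] X) u = z⁻¹ • u := by
          change L.symm u = _
          rw [L.symm_apply_eq, map_smul, ← sub_eq_zero.1 hu0, smul_smul, inv_mul_cancel₀ hz0,
            one_smul]
        have hzi : ‖z⁻¹‖ = 1 := by rw [norm_inv, hz1, inv_one]
        refine aux_zero (c * ‖u‖) t ht0 ht1 fun n => ?_
        have h1 := hUest u hu n
        rw [← aux_pow, aux_eig _ _ hzi u hus n] at h1
        linarith
      rw [hs', hu', add_zero]
    · intro y
      obtain ⟨s, hs, u, hu, rfl⟩ := hdec y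
      have hzi : ‖z⁻¹‖ = 1 := by rw [norm_inv, hz1, inv_one]
      obtain ⟨a, ha, -⟩ := aux_solve (z⁻¹ • (L : X →L[ℂ] X)) s (c * ‖s‖) t ht0.le ht1 (by
        intro n
        rw [smul_pow, ContinuousLinearMap.smul_apply, norm_smul, norm_pow, hzi, one_pow, one_mul,
          aux_pow]
        have := hSest s hs n
        linarith)
      obtain ⟨b, hb, -⟩ := aux_solve (z • (L.symm : X →L[ℂ] X)) u (c * ‖u‖) t ht0.le ht1 (by
        intro n
        rw [smul_pow, ContinuousLinearMap.smul_apply, norm_smul, norm_pow, hz1, one_pow, one_mul,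
          aux_pow]
        have := hUest u hu n
        linarith)
      refine ⟨z⁻¹ • a - L.symm b, ?_⟩
      rw [happ, ← ha, ← hb]
      change _ = (a - z⁻¹ • L a) + (b - z • L.symm b)
      rw [smul_sub, map_sub, map_smul, L.apply_symm_apply, smul_smul, mul_inv_cancel₀ hz0, one_smul]
      abel
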